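/- If the movement graph G_M of a consecutive transition instance with n moving labels is acyclic, then executing the movements consecutively in any topological order of G_M (an order in which, for every edge from vᵢ to vⱼ, movement Mᵢ is executed before Mⱼ) produces at most n overlaps during the transition. -/

import Mathlib

open Set

/-- The closed axis-aligned unit square with lower-left corner `a`. -/
def unitSq (a : ℝ × ℝ) : Set (ℝ × ℝ) :=
  Set.Icc a.1 (a.1 + 1) ×ˢ Set.Icc a.2 (a.2 + 1)

/-- Two unit squares, given by their lower-left corners, overlap if their interiors intersect. -/
def Overlap (a b : ℝ × ℝ) : Prop :=
  (interior (unitSq a) ∩ interior (unitSq b)).Nonempty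

/-- `a` is the lower-left corner of one of the four candidate positions of point `p`
(the four closed unit squares having `p` as a corner). -/
def IsCandidate (p a : ℝ × ℝ) : Prop :=
  a = p ∨ a = (p.1 - 1, p.2) ∨ a = (p.1, p.2 - 1) ∨ a = (p.1 - 1, p.2 - 1)

/-- Two unit squares (given by lower-left corners) share an edge. -/
def SharesEdge (a b : ℝ × ℝ) : Prop :=
  (a.1 = b.1 ∧ (a.2 - b.2 = 1 ∨ b.2 - a.2 = 1)) ∨
  (a.2 = b.2 ∧ (a.1 - b.1 = 1 ∨ b.1 - a.1 = 1))

/-- A movement of the unit-square label of point `p` from candidate position `S` to candidate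
position `E`.  If `S` and `E` share an edge (a non-diagonal movement) we set `I = E` and the
label translates directly from `S` to `E`; if `S` and `E` are diagonally opposite (a diagonal
movement) the label translates through the specified intermediate candidate position `I`,
which shares an edge with both `S` and `E`. -/
structure Movement where
  p : ℝ × ℝ
  S : ℝ × ℝ
  I : ℝ × ℝ
  E : ℝ × ℝ
  candS : IsCandidate p S
  candI : IsCandidate p I
  candE : IsCandidate p E
  legs : (I = E ∧ SharesEdge S E) ∨
    (SharesEdge S I ∧ SharesEdge I E ∧ S.1 ≠ E.1 ∧ S.2 ≠ E.2)

/-- A movement is diagonal if the start and end positions are diagonally opposite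
(equivalently, the intermediate position differs from the end position). -/
def Movement.Diagonal (m : Movement) : Prop := m.I ≠ m.E

/-- Position (lower-left corner) of a moving label at time `t` after the start of its movement:
unit-speed axis-aligned translation, one unit of time per axis-aligned leg; the label rests at
its start position before the movement begins and at its end position after it is finished. -/
noncomputable def Movement.pos (m : Movement) (t : ℝ) : ℝ × ℝ :=
  if t ≤ 0 then m.S
  else if t ≤ 1 then m.S + t • (m.I - m.S)
  else if t ≤ 2 then m.I + (t - 1) • (m.E - m.I)
  else m.E

/-- Duration of a movement: one unit of time per axis-aligned translation. -/
noncomputable def Movement.dur (m : Movement) : ℝ := if m.I = m.E then 1 else 2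

/-- A transition instance: finitely many stationary labels (given by their lower-left corners)
and `n` moving labels, each with a prescribed movement, such that the labeling `L₁` formed by
the stationary labels together with the start positions of the moving labels is overlap-free,
and the labeling `L₂` formed by the stationary labels together with the end positions of the
moving labels is overlap-free. -/
structure TransitionInstance (k n : ℕ) where
  stat : Fin k → ℝ × ℝ
  mov : Fin n → Movement
  free_start : ∀ a b : Fin k ⊕ Fin n, a ≠ b →
    ¬ Overlap (Sum.elim stat (fun j => (mov j).S) a)
      (Sum.elim stat (fun j => (mov j).S) b)
  free_end : ∀ a b : Fin k ⊕ Fin n, a ≠ b →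
    ¬ Overlap (Sum.elim stat (fun j => (mov j).E) a)
      (Sum.elim stat (fun j => (mov j).E) b)

/-- A schedule `τ` of starting times is consecutive if the execution intervals of the movements
are pairwise non-overlapping, i.e. the movements are executed one after another in some order. -/
def Consecutive {k n : ℕ} (T : TransitionInstance k n) (τ : Fin n → ℝ) : Prop :=
  ∀ i j : Fin n, i ≠ j →
    τ i + (T.mov i).dur ≤ τ j ∨ τ j + (T.mov j).dur ≤ τ i

/-- Position (lower-left corner) of each label at global time `t`, when moving label `j`
starts its movement at time `τ j`; stationary labels never move. -/
noncomputable def traj {k n : ℕ} (T : TransitionInstance k n) (τ : Fin n → ℝ) (t : ℝ) :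
    Fin k ⊕ Fin n → ℝ × ℝ :=
  Sum.elim T.stat (fun j => (T.mov j).pos (t - τ j))

/-- The number of overlaps during the transition: the number of unordered pairs of distinct
labels whose interiors intersect at some moment. -/
noncomputable def overlapCount {k n : ℕ} (T : TransitionInstance k n) (τ : Fin n → ℝ) : ℕ :=
  Set.ncard {q : Sym2 (Fin k ⊕ Fin n) | ∃ a b : Fin k ⊕ Fin n,
    q = s(a, b) ∧ a ≠ b ∧ ∃ t : ℝ, Overlap (traj T τ t a) (traj T τ t b)}

/-- The movement graph `G_M`: there is an edge from `vᵢ` to `vⱼ` whenever the intermediate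
(if any) or end position of `Mⱼ` overlaps the start position of `Mᵢ`, or the end position of
`Mⱼ` overlaps the intermediate position (if any) of `Mᵢ`; in addition, if the intermediate
positions of `Mᵢ` and `Mⱼ` overlap and `i < j`, there is an edge from `vᵢ` to `vⱼ`. -/
def Edge {k n : ℕ} (T : TransitionInstance k n) (i j : Fin n) : Prop :=
  ((T.mov j).Diagonal ∧ Overlap (T.mov j).I (T.mov i).S) ∨
  Overlap (T.mov j).E (T.mov i).S ∨
  ((T.mov i).Diagonal ∧ Overlap (T.mov j).E (T.mov i).I) ∨
  ((T.mov i).Diagonal ∧ (T.mov j).Diagonal ∧ Overlap (T.mov i).I (T.mov j).I ∧ i < j)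


theorem overlap_iff (a b : ℝ × ℝ) :
    Overlap a b ↔ (a.1 < b.1 + 1 ∧ b.1 < a.1 + 1) ∧ (a.2 < b.2 + 1 ∧ b.2 < a.2 + 1) := by
  unfold Overlap unitSq
  simp only [interior_prod_eq, interior_Icc]
  constructor
  · rintro ⟨⟨x, y⟩, h1, h2⟩
    simp only [Set.mem_prod, Set.mem_Ioo] at h1 h2
    obtain ⟨⟨_, _⟩, _, _⟩ := h1
    obtain ⟨⟨_, _⟩, _, _⟩ := h2
    refine ⟨⟨?_, ?_⟩, ?_, ?_⟩ <;> linarith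
  · rintro ⟨⟨_, _⟩, _, _⟩
    refine ⟨((a.1 + b.1 + 1) / 2, (a.2 + b.2 + 1) / 2), ?_, ?_⟩ <;>
    · simp only [Set.mem_prod, Set.mem_Ioo]
      refine ⟨⟨?_, ?_⟩, ?_, ?_⟩ <;> linarith

theorem overlap_comm {a b : ℝ × ℝ} (h : Overlap a b) : Overlap b a := by
  rw [overlap_iff] at *
  tauto

/-- A label met during an axis-parallel translation is met at one of the two ends. -/
theorem overlap_leg {a b c : ℝ × ℝ} {t : ℝ} (h : SharesEdge a b) (h0 : 0 ≤ t) (h1 : t ≤ 1)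
    (ho : Overlap (a + t • (b - a)) c) : Overlap a c ∨ Overlap b c := by
  obtain ⟨a1, a2⟩ := a
  obtain ⟨b1, b2⟩ := b
  obtain ⟨c1, c2⟩ := c
  simp only [overlap_iff, SharesEdge, Prod.fst_add, Prod.snd_add, Prod.smul_fst, Prod.smul_snd,
    Prod.fst_sub, Prod.snd_sub, smul_eq_mul] at *
  rcases h with ⟨rfl, h | h⟩ | ⟨rfl, h | h⟩
  · obtain rfl : a2 = b2 + 1 := by linarith
    ring_nf at ho
    grind
  · obtain rfl : b2 = a2 + 1 := by linarith
    ring_nf at ho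
    grind
  · obtain rfl : a1 = b1 + 1 := by linarith
    ring_nf at ho
    grind
  · obtain rfl : b1 = a1 + 1 := by linarith
    ring_nf at ho
    grind

theorem overlap_pos {m : Movement} {c : ℝ × ℝ} {t : ℝ} (ho : Overlap (m.pos t) c) :
    Overlap m.S c ∨ Overlap m.I c ∨ Overlap m.E c := by
  have hSI : SharesEdge m.S m.I := by
    rcases m.legs with ⟨h, h'⟩ | h
    · rwa [h]
    · exact h.1
  unfold Movement.pos at ho
  split_ifs at ho with h0 h1 h2
  · exact Or.inl ho
  · rcases overlap_leg hSI (by linarith) h1 ho with h | h <;> tauto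
  · rcases m.legs with ⟨h, -⟩ | h
    · rw [h] at ho
      simp at ho
      tauto
    · rcases overlap_leg h.2.1 (by linarith) (by linarith) ho with h | h <;> tauto
  · exact Or.inr (Or.inr ho)

theorem pos_of_le {m : Movement} {t : ℝ} (h : t ≤ 0) : m.pos t = m.S := by
  simp [Movement.pos, h]

theorem dur_pos (m : Movement) : 0 < m.dur := by
  unfold Movement.dur
  split_ifs <;> norm_num

theorem pos_of_ge {m : Movement} {t : ℝ} (h : m.dur < t) : m.pos t = m.E := by
  have := dur_pos m
  unfold Movement.dur at h
  unfold Movement.pos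
  split_ifs at h with hI
  · rw [if_neg (by linarith), if_neg (by linarith), hI]
    simp
  · rw [if_neg (by linarith), if_neg (by linarith), if_neg (by linarith)]

/-- At most one label of an overlap-free labeling meets only the intermediate position. -/
theorem corner {m : Movement} {c d : ℝ × ℝ} (hcS : ¬ Overlap m.S c) (hcE : ¬ Overlap m.E c)
    (hdS : ¬ Overlap m.S d) (hdE : ¬ Overlap m.E d) (hc : Overlap m.I c) (hd : Overlap m.I d) :
    Overlap c d := by
  rcases m.legs with ⟨h, -⟩ | ⟨h1, h2, h3, h4⟩
  · exact absurd (h ▸ hc) hcE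
  · generalize m.S = S at *
    generalize m.I = I at *
    generalize m.E = E at *
    simp only [overlap_iff, SharesEdge] at *
    rcases h1 with ⟨h1, h | h⟩ | ⟨h1, h | h⟩ <;> rcases h2 with ⟨h2, g | g⟩ | ⟨h2, g | g⟩ <;>
      first
      | exact absurd (h1.trans h2) (by assumption)
      | (refine ⟨⟨?_, ?_⟩, ?_, ?_⟩ <;> grind)

theorem no_moving_overlap {k n : ℕ} (T : TransitionInstance k n) (τ : Fin n → ℝ)
    (htopo : ∀ i j : Fin n, Edge T i j → τ i + (T.mov i).dur ≤ τ j) {i j : Fin n}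
    (hij : i ≠ j) (hb : τ i + (T.mov i).dur ≤ τ j) (t : ℝ) :
    ¬ Overlap ((T.mov i).pos (t - τ i)) ((T.mov j).pos (t - τ j)) := by
  intro ho
  have hne : ¬ Edge T j i := fun h => by
    have := htopo j i h
    linarith [dur_pos (T.mov i), dur_pos (T.mov j)]
  have hs := T.free_start (Sum.inr i) (Sum.inr j) (by simpa using hij)
  have he := T.free_end (Sum.inr i) (Sum.inr j) (by simpa using hij)
  simp only [Sum.elim_inr] at hs he
  unfold Edge Movement.Diagonal at hne
  push Not at hne
  obtain ⟨n1, n2, n3, -⟩ := hne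
  by_cases ht : t ≤ τ j
  · rw [pos_of_le (m := T.mov j) (by linarith)] at ho
    rcases overlap_pos ho with h | h | h
    · exact hs h
    · by_cases hd : (T.mov i).I = (T.mov i).E
      · exact n2 (hd ▸ h)
      · exact n1 hd h
    · exact n2 h
  · rw [pos_of_ge (m := T.mov i) (by linarith)] at ho
    rcases overlap_pos (overlap_comm ho) with h | h | h
    · exact n2 (overlap_comm h)
    · by_cases hd : (T.mov j).I = (T.mov j).E
      · exact he (overlap_comm (hd ▸ h))
      · exact n3 hd (overlap_comm h)
    · exact he (overlap_comm h)

theorem stat_overlap {k n : ℕ} (T : TransitionInstance k n) {i : Fin n} {s : Fin k} {t : ℝ}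
    (ho : Overlap ((T.mov i).pos t) (T.stat s)) : Overlap (T.mov i).I (T.stat s) := by
  rcases overlap_pos ho with h | h | h
  · exact absurd h (T.free_start (Sum.inr i) (Sum.inl s) (by simp))
  · exact h
  · exact absurd h (T.free_end (Sum.inr i) (Sum.inl s) (by simp))

theorem stat_unique {k n : ℕ} (T : TransitionInstance k n) {i : Fin n} {s s' : Fin k}
    (h : Overlap (T.mov i).I (T.stat s)) (h' : Overlap (T.mov i).I (T.stat s')) : s = s' := by
  by_contra hne
  exact T.free_start (Sum.inl s) (Sum.inl s') (by simpa using hne)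
    (corner (T.free_start (Sum.inr i) (Sum.inl s) (by simp))
      (T.free_end (Sum.inr i) (Sum.inl s) (by simp))
      (T.free_start (Sum.inr i) (Sum.inl s') (by simp))
      (T.free_end (Sum.inr i) (Sum.inl s') (by simp)) h h')

/-- If the movement graph of a consecutive transition instance with `n` moving labels is
acyclic, then executing the movements consecutively in any topological order of the movement
graph (for every edge from `vᵢ` to `vⱼ`, movement `Mᵢ` is executed before `Mⱼ`) produces at
most `n` overlaps during the transition. -/
theorem consecutive_overlaps_le_of_acyclic {k n : ℕ} (T : TransitionInstance k n)
    (hacyclic : ∀ i : Fin n, ¬ Relation.TransGen (Edge T) i i)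
    (τ : Fin n → ℝ) (hcons : Consecutive T τ)
    (htopo : ∀ i j : Fin n, Edge T i j → τ i + (T.mov i).dur ≤ τ j) :
    overlapCount T τ ≤ n := by
  classical
  let f : Fin n → Sym2 (Fin k ⊕ Fin n) := fun i =>
    if h : ∃ s, Overlap (T.mov i).I (T.stat s) then s(Sum.inl h.choose, Sum.inr i)
    else s(Sum.inr i, Sum.inr i)
  have key : ∀ (i : Fin n) (s : Fin k) (t : ℝ), Overlap ((T.mov i).pos t) (T.stat s) →
      f i = s(Sum.inl s, Sum.inr i) := by
    intro i s t ho
    have h1 := stat_overlap T ho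
    have hex : ∃ s, Overlap (T.mov i).I (T.stat s) := ⟨s, h1⟩
    simp only [f, dif_pos hex]
    rw [stat_unique T hex.choose_spec h1]
  have hsub : {q : Sym2 (Fin k ⊕ Fin n) | ∃ a b : Fin k ⊕ Fin n,
      q = s(a, b) ∧ a ≠ b ∧ ∃ t : ℝ, Overlap (traj T τ t a) (traj T τ t b)} ⊆
      Set.image f Set.univ := by
    rintro q ⟨a, b, rfl, hab, t, ho⟩
    rcases a with a | a <;> rcases b with b | b <;> simp only [traj, Sum.elim_inl, Sum.elim_inr] at ho
    · exact absurd ho (T.free_start (Sum.inl a) (Sum.inl b) hab)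
    · exact ⟨b, Set.mem_univ _, key b a _ (overlap_comm ho)⟩
    · exact ⟨a, Set.mem_univ _, (key a b _ ho).trans Sym2.eq_swap⟩
    · have hne : a ≠ b := fun h => hab (by rw [h])
      rcases hcons a b hne with h | h
      · exact absurd ho (no_moving_overlap T τ htopo hne h t)
      · exact absurd (overlap_comm ho) (no_moving_overlap T τ htopo hne.symm h t)
  calc overlapCount T τ ≤ (Set.image f Set.univ).ncard := Set.ncard_le_ncard hsub (Set.toFinite _)
    _ ≤ (Set.univ : Set (Fin n)).ncard := Set.ncard_image_le (Set.toFinite _)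
    _ = n := by simp [Set.ncard_univ]
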